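/- Let p be a prime, F a field of characteristic p, and r, s integers with 1 ≤ r ≤ p and 1 ≤ s ≤ p. If r + s ≤ p, then the Kronecker product J_r ⊗ J_s is similar over F to the block-diagonal matrix with blocks J_{r+s−2j+1} for 1 ≤ j ≤ min(r,s). If r + s > p, then J_r ⊗ J_s is similar over F to the block-diagonal matrix consisting of r + s − p blocks equal to J_p together with one block J_{2p−r−s−2j+1} for each 1 ≤ j ≤ p − max(r,s). -/

import Mathlib

open Kronecker

/-- The `m × m` Jordan block with eigenvalue `1`: ones on the main diagonal and the
superdiagonal, zeros elsewhere. -/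
def jordanBlock (F : Type*) [Zero F] [One F] (m : ℕ) : Matrix (Fin m) (Fin m) F :=
  Matrix.of fun i j => if (j : ℕ) = (i : ℕ) ∨ (j : ℕ) = (i : ℕ) + 1 then 1 else 0

/-- The block-diagonal matrix whose diagonal blocks are the Jordan blocks `J_{d i}`, `i : ι`. -/
def jordanBlockDiag (F : Type*) [Field F] {ι : Type} [DecidableEq ι] (d : ι → ℕ) :
    Matrix ((i : ι) × Fin (d i)) ((i : ι) × Fin (d i)) F :=
  Matrix.blockDiagonal' fun i => jordanBlock F (d i)

/-- Similarity of square matrices, possibly indexed by different (finite) types: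
both matrices represent the same linear endomorphism up to a linear change of basis. -/
def MatSimilar (F : Type*) [Field F] {n m : Type*} [Fintype n] [Fintype m]
    (A : Matrix n n F) (B : Matrix m m F) : Prop :=
  ∃ e : (n → F) ≃ₗ[F] (m → F), ∀ v, e (A.mulVec v) = B.mulVec (e v)

/-!
Write `J_r = 1 + x` and `J_s = 1 + y` with `x ^ r = 0 = y ^ s`. Since `1 + y` is a unit, the
substitution `x ↦ x (1 + y)` is a change of basis that turns `J_r ⊗ J_s = (1 + x) (1 + y)` into
`1 + N` with `N = x + y`, and it remains to find the Jordan chains of the nilpotent operator `N`.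
As `N` is homogeneous for the grading by antidiagonals, chains whose last vectors lie on distinct
antidiagonals are independent, so it suffices that their lengths add up to `r s`.

* `N` is the raising operator of `sl₂` on the tensor product of the representations of dimensions
  `r` and `s`. On the antidiagonal `i + k = j < min r s` it kills a vector `w` of weight
  `m = r + s - 2 - 2 j`; applying the lowering operator `m` times to `w`, and then `N` as often,
  multiplies `w` by `(m!) ^ 2`. So if `m < p`, there is a chain of length `m + 1` ending at `w`.
* `N ^ p = x ^ p + y ^ p = 0`, while `N ^ (p - 1)` has an entry `(p - 1).choose (r - 1) ≠ 0` in
  the antidiagonal `j < r + s - p`. This yields a chain of length `p` for each such `j`.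
-/

open Finset Matrix

section Similarity

variable {F : Type*} [Field F] {l m n : Type*} [Fintype l] [Fintype m] [Fintype n]

lemma MatSimilar.trans {A : Matrix l l F} {B : Matrix m m F} {C : Matrix n n F}
    (hAB : MatSimilar F A B) (hBC : MatSimilar F B C) : MatSimilar F A C := by
  obtain ⟨e, he⟩ := hAB
  obtain ⟨e', he'⟩ := hBC
  exact ⟨e.trans e', fun v => by simp only [LinearEquiv.trans_apply, he, he']⟩

lemma MatSimilar.of_mul_eq_mul [DecidableEq n] {A B T : Matrix n n F} (hT : IsUnit T)
    (h : T * A = B * T) : MatSimilar F A B := by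
  obtain ⟨_⟩ := hT.nonempty_invertible
  refine ⟨T.toLinearEquiv' inferInstance, fun v => ?_⟩
  change T *ᵥ (A *ᵥ v) = B *ᵥ (T *ᵥ v)
  rw [mulVec_mulVec, mulVec_mulVec, h]

end Similarity

section LinearAlgebra

lemma linearIndependent_of_disjoint_support {ι α R : Type*} [Ring R] [NoZeroDivisors R]
    {u : ι → α → R} (hne : ∀ i, u i ≠ 0)
    (hdisj : Pairwise fun i j => Disjoint (Function.support (u i)) (Function.support (u j))) :
    LinearIndependent R u := by
  refine linearIndependent_iff'.2 fun t c hc i hi => ?_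
  obtain ⟨x, hx⟩ := Function.ne_iff.1 (hne i)
  have hcx : ∑ k ∈ t, c k * u k x = 0 := by simpa using congrFun hc x
  rw [sum_eq_single_of_mem i hi fun k _ hki => ?_] at hcx
  · exact (mul_eq_zero.1 hcx).resolve_right hx
  · rw [Function.notMem_support.1 fun hk => (hdisj hki).le_bot ⟨hk, hx⟩, mul_zero]

lemma injective_of_intertwines_of_isNilpotent {R V W : Type*} [Ring R] [AddCommGroup V]
    [AddCommGroup W] [Module R V] [Module R W] {f : V →ₗ[R] W} {N : Module.End R V}
    {N' : Module.End R W} (hN : IsNilpotent N) (hf : ∀ x, f (N x) = N' (f x))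
    (hker : ∀ x, N x = 0 → f x = 0 → x = 0) : Function.Injective f := by
  obtain ⟨n, hn⟩ := hN
  have eq_zero_of_pow : ∀ k x, (N ^ k) x = 0 → f x = 0 → x = 0 := by
    intro k
    induction k with
    | zero => exact fun x hx _ => hx
    | succ k ih =>
      intro x hx hfx
      refine hker x (ih (N x) ?_ ?_) hfx
      · rwa [pow_succ] at hx
      · rw [hf, hfx, map_zero]
  exact (injective_iff_map_eq_zero f).2 fun x => eq_zero_of_pow n x (by simp [hn])

lemma blockDiagonal'_mulVec_apply {ι R : Type*} [Fintype ι] [DecidableEq ι]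
    [NonUnitalNonAssocSemiring R] {m : ι → Type*} [∀ i, Fintype (m i)]
    (M : ∀ i, Matrix (m i) (m i) R) (c : (Σ i, m i) → R) (i : ι) (k : m i) :
    (blockDiagonal' M *ᵥ c) ⟨i, k⟩ = (M i *ᵥ fun k' => c ⟨i, k'⟩) k := by
  simp only [mulVec, dotProduct, Fintype.sum_sigma]
  rw [sum_eq_single i (fun j _ hj => sum_eq_zero fun k' _ => ?_) (by simp)]
  · simp only [blockDiagonal'_apply_eq]
  · rw [blockDiagonal'_apply_ne _ _ _ hj.symm, zero_mul]

end LinearAlgebra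

section ShiftMatrix

variable {R : Type*}

/-- The nilpotent Jordan block of size `m`, with ones on the superdiagonal. -/
def shiftMatrix (R : Type*) [Zero R] [One R] (m : ℕ) : Matrix (Fin m) (Fin m) R :=
  of fun i j => if (j : ℕ) = i + 1 then 1 else 0

lemma jordanBlock_eq_one_add_shiftMatrix [AddMonoidWithOne R] (m : ℕ) :
    jordanBlock R m = 1 + shiftMatrix R m := by
  ext i j
  simp only [jordanBlock, shiftMatrix, Matrix.add_apply, Matrix.one_apply, of_apply, Fin.ext_iff]
  grind

lemma shiftMatrix_mulVec_apply [NonAssocSemiring R] {m : ℕ} (c : Fin m → R) (i : Fin m) :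
    (shiftMatrix R m *ᵥ c) i = if h : (i : ℕ) + 1 < m then c ⟨i + 1, h⟩ else 0 := by
  simp only [mulVec, dotProduct, shiftMatrix, of_apply, ite_mul, one_mul, zero_mul]
  split_ifs with h
  · rw [sum_eq_single ⟨i + 1, h⟩ (fun k _ hk => if_neg fun hki => hk (Fin.ext hki)) (by simp)]
    simp
  · exact sum_eq_zero fun k _ => if_neg (by omega)

lemma vecMul_shiftMatrix_apply [NonAssocSemiring R] {m : ℕ} (c : Fin m → R) (j : Fin m) :
    (c ᵥ* shiftMatrix R m) j = if 0 < (j : ℕ) then c ⟨j - 1, by omega⟩ else 0 := by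
  simp only [vecMul, dotProduct, shiftMatrix, of_apply, mul_ite, mul_one, mul_zero]
  split_ifs with h
  · rw [sum_eq_single ⟨j - 1, by omega⟩
      (fun k _ hk => if_neg fun hkj => hk (Fin.ext (by simp [hkj]))) (by simp)]
    exact if_pos (by dsimp only; omega)
  · exact sum_eq_zero fun k _ => if_neg (by omega)

lemma shiftMatrix_pow_apply [Semiring R] {m : ℕ} (t : ℕ) (i j : Fin m) :
    (shiftMatrix R m ^ t) i j = if (j : ℕ) = i + t then 1 else 0 := by
  induction t generalizing i with
  | zero => simp [Matrix.one_apply, Fin.ext_iff, eq_comm]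
  | succ t ih =>
    have hmul : (shiftMatrix R m ^ (t + 1)) i j =
        (shiftMatrix R m *ᵥ fun k => (shiftMatrix R m ^ t) k j) i := by
      rw [pow_succ']
      rfl
    rw [hmul, shiftMatrix_mulVec_apply]
    simp only [ih]
    grind

lemma shiftMatrix_pow_eq_zero [Semiring R] {m t : ℕ} (h : m ≤ t) : shiftMatrix R m ^ t = 0 := by
  ext i j
  rw [shiftMatrix_pow_apply, if_neg (by omega), Matrix.zero_apply]

lemma isUnit_jordanBlock [Ring R] (m : ℕ) : IsUnit (jordanBlock R m) := by
  rw [jordanBlock_eq_one_add_shiftMatrix]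
  exact IsNilpotent.isUnit_one_add ⟨m, shiftMatrix_pow_eq_zero le_rfl⟩

lemma sum_shiftMatrix_mulVec_smul [Semiring R] {V : Type*} [AddCommMonoid V] [Module R V] {m : ℕ}
    (c : Fin m → R) {g : ℕ → V} (hg : g m = 0) :
    ∑ k, (shiftMatrix R m *ᵥ c) k • g k.rev = ∑ k, c k • g (k.rev + 1) := by
  cases m with
  | zero => simp
  | succ m =>
    rw [Fin.sum_univ_castSucc, Fin.sum_univ_succ]
    simp [shiftMatrix_mulVec_apply, hg, Fin.rev_castSucc, Fin.succ]

end ShiftMatrix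

section JordanChains

variable {F : Type*} [Field F] {ι : Type}

lemma jordanBlockDiag_eq_one_add [DecidableEq ι] (d : ι → ℕ) :
    jordanBlockDiag F d = 1 + blockDiagonal' fun i => shiftMatrix F (d i) := by
  simp only [jordanBlockDiag, jordanBlock_eq_one_add_shiftMatrix, ← blockDiagonal'_one,
    ← blockDiagonal'_add]
  rfl

lemma isNilpotent_blockDiagonal'_shiftMatrix [Fintype ι] [DecidableEq ι] (d : ι → ℕ) :
    IsNilpotent (blockDiagonal' fun i => shiftMatrix F (d i)) := by
  refine ⟨∑ i, d i, ?_⟩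
  rw [← blockDiagonal'_pow, ← blockDiagonal'_zero]
  congr 1
  ext1 i
  exact shiftMatrix_pow_eq_zero (single_le_sum (fun _ _ => Nat.zero_le _) (mem_univ i))

variable {V : Type*} [AddCommGroup V] [Module F V] [Fintype ι]

/-- The linear map sending the standard basis of the `i`-th block to the Jordan chain
`N ^ (d i - 1) (v i), …, N (v i), v i` generated by `v i`, listed from its end so that `N` moves
each vector to the preceding one. -/
noncomputable def chainMap (N : Module.End F V) (d : ι → ℕ) (v : ι → V) :
    ((i : ι) × Fin (d i) → F) →ₗ[F] V :=
  Fintype.linearCombination F fun x : (i : ι) × Fin (d i) => (N ^ (x.2.rev : ℕ)) (v x.1)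

variable {N : Module.End F V} {d : ι → ℕ} {v : ι → V}

lemma chainMap_apply (c : (i : ι) × Fin (d i) → F) :
    chainMap N d v c = ∑ i, ∑ k : Fin (d i), c ⟨i, k⟩ • (N ^ (k.rev : ℕ)) (v i) := by
  rw [chainMap, Fintype.linearCombination_apply, Fintype.sum_sigma]

lemma chainMap_blockDiagonal'_shiftMatrix_mulVec [DecidableEq ι]
    (hN : ∀ i, (N ^ d i) (v i) = 0) (c : (i : ι) × Fin (d i) → F) :
    chainMap N d v ((blockDiagonal' fun i => shiftMatrix F (d i)) *ᵥ c) = N (chainMap N d v c) := by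
  simp only [chainMap_apply, map_sum, map_smul, blockDiagonal'_mulVec_apply]
  refine sum_congr rfl fun i _ => ?_
  rw [sum_shiftMatrix_mulVec_smul (g := fun n => (N ^ n) (v i)) _ (hN i)]
  simp only [pow_succ', Module.End.mul_apply]

lemma chainMap_injective (hN : ∀ i, (N ^ d i) (v i) = 0)
    (hli : LinearIndependent F fun i => (N ^ (d i - 1)) (v i)) :
    Function.Injective (chainMap N d v) := by
  classical
  refine injective_of_intertwines_of_isNilpotent
    ((isNilpotent_blockDiagonal'_shiftMatrix d).map toLinAlgEquiv')
    (chainMap_blockDiagonal'_shiftMatrix_mulVec hN) fun c hc hcN => ?_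
  have hpos : ∀ i, 0 < d i := fun i => Nat.pos_of_ne_zero fun hi =>
    hli.ne_zero i (by simpa [hi] using hN i)
  have eq_zero_of_pos : ∀ i (k : Fin (d i)), 0 < (k : ℕ) → c ⟨i, k⟩ = 0 := by
    intro i k hk
    have hck := congrFun hc ⟨i, ⟨k - 1, by omega⟩⟩
    rw [toLinAlgEquiv'_apply, blockDiagonal'_mulVec_apply, shiftMatrix_mulVec_apply,
      dif_pos (by dsimp only; omega)] at hck
    simpa [Nat.sub_add_cancel hk] using hck
  have hends : ∑ i, c ⟨i, ⟨0, hpos i⟩⟩ • (N ^ (d i - 1)) (v i) = 0 := by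
    rw [← hcN, chainMap_apply]
    refine sum_congr rfl fun i _ => ?_
    rw [sum_eq_single ⟨0, hpos i⟩ (fun k _ hk => ?_) (by simp)]
    · simp [Fin.val_rev]
    · rw [eq_zero_of_pos i k (Nat.pos_of_ne_zero fun h => hk (Fin.ext h)), zero_smul]
  ext ⟨i, k⟩
  rcases Nat.eq_zero_or_pos k with hk | hk
  · rw [show k = ⟨0, hpos i⟩ from Fin.ext hk]
    exact Fintype.linearIndependent_iff.1 hli _ hends i
  · exact eq_zero_of_pos i k hk

theorem exists_equiv_jordanBlockDiag [DecidableEq ι] [FiniteDimensional F V]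
    (hN : ∀ i, (N ^ d i) (v i) = 0)
    (hli : LinearIndependent F fun i => (N ^ (d i - 1)) (v i))
    (hd : ∑ i, d i = Module.finrank F V) :
    ∃ e : V ≃ₗ[F] ((i : ι) × Fin (d i) → F), ∀ x, e (x + N x) = jordanBlockDiag F d *ᵥ e x := by
  let e := LinearEquiv.ofInjectiveOfFinrankEq (chainMap N d v) (chainMap_injective hN hli)
    (by simp [hd])
  have he : ∀ c, e (jordanBlockDiag F d *ᵥ c) = e c + N (e c) := fun c => by
    rw [jordanBlockDiag_eq_one_add, add_mulVec, one_mulVec, map_add]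
    exact congrArg (e c + ·) (chainMap_blockDiagonal'_shiftMatrix_mulVec hN c)
  exact ⟨e.symm, fun x => by rw [e.symm_apply_eq, he, e.apply_symm_apply]⟩

end JordanChains

section KroneckerSum

variable {R m n : Type*} [CommSemiring R] [DecidableEq m] [DecidableEq n]

/-- The Kronecker sum `A ⊗ 1 + 1 ⊗ B`, the action of `A` and `B` on a tensor product by
derivations. -/
def kroneckerSum (A : Matrix m m R) (B : Matrix n n R) : Matrix (m × n) (m × n) R :=
  A ⊗ₖ 1 + 1 ⊗ₖ B

lemma kroneckerSum_smul (c : R) (A : Matrix m m R) (B : Matrix n n R) :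
    kroneckerSum (c • A) (c • B) = c • kroneckerSum A B := by
  simp only [kroneckerSum, smul_kronecker, kronecker_smul, smul_add]

lemma kroneckerSum_diagonal (a : m → R) (b : n → R) :
    kroneckerSum (diagonal a) (diagonal b) = diagonal fun x => a x.1 + b x.2 := by
  rw [kroneckerSum, ← diagonal_one, ← diagonal_one, diagonal_kronecker_diagonal,
    diagonal_kronecker_diagonal, diagonal_add]
  simp only [mul_one, one_mul]

variable [Fintype m] [Fintype n]

lemma kroneckerSum_mulVec_apply (A : Matrix m m R) (B : Matrix n n R) (v : m × n → R)
    (x : m × n) :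
    (kroneckerSum A B *ᵥ v) x =
      (A *ᵥ fun i => v (i, x.2)) x.1 + (B *ᵥ fun k => v (x.1, k)) x.2 := by
  simp [kroneckerSum, mulVec, dotProduct, Fintype.sum_prod_type, Matrix.one_apply, add_mul,
    sum_add_distrib, ite_mul, zero_mul]

lemma lie_kroneckerSum {R : Type*} [CommRing R] (A C : Matrix m m R) (B D : Matrix n n R) :
    ⁅kroneckerSum A B, kroneckerSum C D⁆ = kroneckerSum ⁅A, C⁆ ⁅B, D⁆ := by
  have hleft : ⁅A, C⁆ ⊗ₖ (1 : Matrix n n R) = (A * C) ⊗ₖ 1 - (C * A) ⊗ₖ 1 := by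
    rw [eq_sub_iff_add_eq, ← add_kronecker, Ring.lie_def, sub_add_cancel]
  have hright : (1 : Matrix m m R) ⊗ₖ ⁅B, D⁆ = 1 ⊗ₖ (B * D) - 1 ⊗ₖ (D * B) := by
    rw [eq_sub_iff_add_eq, ← kronecker_add, Ring.lie_def, sub_add_cancel]
  rw [Ring.lie_def, kroneckerSum, kroneckerSum, kroneckerSum, hleft, hright]
  simp only [add_mul, mul_add, ← mul_kronecker_mul, mul_one, one_mul]
  abel

lemma commute_kronecker_one_one_kronecker (A : Matrix m m R) (B : Matrix n n R) :
    Commute (A ⊗ₖ (1 : Matrix n n R)) ((1 : Matrix m m R) ⊗ₖ B) := by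
  simp only [Commute, SemiconjBy, ← mul_kronecker_mul, mul_one, one_mul]

lemma kronecker_one_pow (A : Matrix m m R) (t : ℕ) :
    (A ⊗ₖ (1 : Matrix n n R)) ^ t = (A ^ t) ⊗ₖ (1 : Matrix n n R) := by
  induction t with
  | zero => simp
  | succ t ih => rw [pow_succ, pow_succ, ih, ← mul_kronecker_mul, mul_one]

lemma one_kronecker_pow (B : Matrix n n R) (t : ℕ) :
    ((1 : Matrix m m R) ⊗ₖ B) ^ t = (1 : Matrix m m R) ⊗ₖ (B ^ t) := by
  induction t with
  | zero => simp
  | succ t ih => rw [pow_succ, pow_succ, ih, ← mul_kronecker_mul, mul_one]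

lemma kroneckerSum_pow (A : Matrix m m R) (B : Matrix n n R) (t : ℕ) :
    kroneckerSum A B ^ t = ∑ a ∈ antidiagonal t, t.choose a.1 • ((A ^ a.1) ⊗ₖ (B ^ a.2)) := by
  simp only [kroneckerSum, (commute_kronecker_one_one_kronecker A B).add_pow', kronecker_one_pow,
    one_kronecker_pow, ← mul_kronecker_mul, mul_one, one_mul]

lemma kroneckerSum_pow_char [Nonempty m] [Nonempty n] (p : ℕ) [Fact p.Prime] [CharP R p]
    (A : Matrix m m R) (B : Matrix n n R) :
    kroneckerSum A B ^ p = kroneckerSum (A ^ p) (B ^ p) := by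
  rw [kroneckerSum, add_pow_char_of_commute p (commute_kronecker_one_one_kronecker A B),
    kronecker_one_pow, one_kronecker_pow, kroneckerSum]

end KroneckerSum

section KroneckerTwist

variable {R n : Type*} [CommSemiring R] [Fintype n] [DecidableEq n]

/-- The block-diagonal matrix with blocks `1, U, …, U ^ (r - 1)`. For `U = 1 + y` it realizes the
substitution `x ↦ x (1 + y)`, which turns `(1 + x) (1 + y)` into `1 + x + y`. -/
def kroneckerTwist (r : ℕ) (U : Matrix n n R) : Matrix (Fin r × n) (Fin r × n) R :=
  comp _ _ _ _ R (diagonal fun i => U ^ (i : ℕ))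

lemma isUnit_kroneckerTwist (r : ℕ) {U : Matrix n n R} (hU : IsUnit U) :
    IsUnit (kroneckerTwist r U) :=
  (isUnit_comp_iff _ _ _).2 <| IsUnit.map (diagonalRingHom (Fin r) (Matrix n n R)) <|
    Pi.isUnit_iff.2 fun i => hU.pow (i : ℕ)

lemma kroneckerTwist_mul_jordanBlock_kronecker (r : ℕ) (U : Matrix n n R) :
    kroneckerTwist r U * (jordanBlock R r ⊗ₖ U) =
      kroneckerSum (shiftMatrix R r) U * kroneckerTwist r U := by
  have hblock : (jordanBlock R r ⊗ₖ U) =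
      compRingEquiv _ _ R (of fun i j => jordanBlock R r i j • U) := rfl
  have hsum : kroneckerSum (shiftMatrix R r) U = compRingEquiv _ _ R
      (of fun i j => shiftMatrix R r i j • 1 + (1 : Matrix (Fin r) (Fin r) R) i j • U) := rfl
  have htwist : kroneckerTwist r U =
      compRingEquiv _ _ R (diagonal fun i : Fin r => U ^ (i : ℕ)) := rfl
  rw [hblock, hsum, htwist, ← map_mul, ← map_mul]
  congr 1
  ext1 i j
  simp only [diagonal_mul, mul_diagonal, of_apply, jordanBlock_eq_one_add_shiftMatrix,
    Matrix.add_apply, Matrix.one_apply, shiftMatrix, Fin.ext_iff, ← pow_succ, ← pow_succ', add_mul,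
    ite_smul, one_smul, zero_smul, mul_ite, mul_zero, add_smul, mul_add, ite_mul, one_mul, zero_mul]
  grind

end KroneckerTwist

section ShiftSum

variable {R : Type*} [CommSemiring R] {r s : ℕ}

/-- The nilpotent operator `X ⊗ 1 + 1 ⊗ Y` for nilpotent Jordan blocks `X` and `Y` of sizes `r`
and `s`. -/
abbrev shiftSum (R : Type*) [CommSemiring R] (r s : ℕ) : Matrix (Fin r × Fin s) (Fin r × Fin s) R :=
  kroneckerSum (shiftMatrix R r) (shiftMatrix R s)

lemma shiftSum_pow_apply (t : ℕ) (x y : Fin r × Fin s) :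
    (shiftSum R r s ^ t) x y = ∑ a ∈ antidiagonal t,
      if (y.1 : ℕ) = x.1 + a.1 ∧ (y.2 : ℕ) = x.2 + a.2 then (t.choose a.1 : R) else 0 := by
  rw [kroneckerSum_pow, Matrix.sum_apply]
  refine sum_congr rfl fun a _ => ?_
  rw [Matrix.smul_apply, kronecker_apply, shiftMatrix_pow_apply, shiftMatrix_pow_apply,
    ite_zero_mul_ite_zero, mul_one, nsmul_eq_mul, mul_ite, mul_one, mul_zero]

lemma shiftSum_pow_apply_eq_zero {t : ℕ} {x y : Fin r × Fin s}
    (h : (y.1 + y.2 : ℕ) ≠ x.1 + x.2 + t) : (shiftSum R r s ^ t) x y = 0 := by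
  rw [shiftSum_pow_apply]
  refine sum_eq_zero fun a ha => if_neg ?_
  rw [HasAntidiagonal.mem_antidiagonal] at ha
  omega

lemma shiftSum_pow_add_apply {a b : ℕ} {x y : Fin r × Fin s} (h₁ : (y.1 : ℕ) = x.1 + a)
    (h₂ : (y.2 : ℕ) = x.2 + b) : (shiftSum R r s ^ (a + b)) x y = ((a + b).choose a : R) := by
  rw [shiftSum_pow_apply,
    sum_eq_single_of_mem (a, b) (HasAntidiagonal.mem_antidiagonal.2 rfl) fun c _ hc => ?_]
  · exact if_pos ⟨h₁, h₂⟩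
  · exact if_neg fun h => hc (Prod.ext (by omega) (by omega))

lemma shiftSum_pow_char_eq_zero [NeZero r] [NeZero s] (p : ℕ) [Fact p.Prime] [CharP R p]
    (hr : r ≤ p) (hs : s ≤ p) : shiftSum R r s ^ p = 0 := by
  rw [kroneckerSum_pow_char, shiftMatrix_pow_eq_zero hr, shiftMatrix_pow_eq_zero hs, kroneckerSum,
    zero_kronecker, kronecker_zero, add_zero]

lemma kroneckerSum_shiftMatrix_jordanBlock :
    kroneckerSum (shiftMatrix R r) (jordanBlock R s) = 1 + shiftSum R r s := by
  rw [jordanBlock_eq_one_add_shiftMatrix, shiftSum, kroneckerSum, kroneckerSum, kronecker_add,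
    one_kronecker_one, add_left_comm]

end ShiftSum

section KroneckerJordanBlocks

variable {F : Type*} [Field F] {r s : ℕ}

lemma matSimilar_jordanBlock_kronecker_one_add_shiftSum (r s : ℕ) :
    MatSimilar F (jordanBlock F r ⊗ₖ jordanBlock F s) (1 + shiftSum F r s) :=
  .of_mul_eq_mul (isUnit_kroneckerTwist r (isUnit_jordanBlock s)) <| by
    rw [kroneckerTwist_mul_jordanBlock_kronecker, kroneckerSum_shiftMatrix_jordanBlock]

/-- There is a Jordan chain of length `d` for `shiftSum R r s` whose last vector, the one in the
kernel, is supported on the antidiagonal `i + k = e`. -/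
def HasJordanChain (R : Type*) [CommSemiring R] (r s d e : ℕ) : Prop :=
  ∃ v : Fin r × Fin s → R, shiftSum R r s ^ d *ᵥ v = 0 ∧ shiftSum R r s ^ (d - 1) *ᵥ v ≠ 0 ∧
    ∀ x, (shiftSum R r s ^ (d - 1) *ᵥ v) x ≠ 0 → (x.1 + x.2 : ℕ) = e

lemma matSimilar_jordanBlockDiag_of_hasJordanChain {ι : Type} [Fintype ι] [DecidableEq ι]
    {d e : ι → ℕ} (hchain : ∀ i, HasJordanChain F r s (d i) (e i)) (he : Function.Injective e)
    (hd : ∑ i, d i = r * s) :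
    MatSimilar F (jordanBlock F r ⊗ₖ jordanBlock F s) (jordanBlockDiag F d) := by
  choose v hzero hne hsupp using hchain
  have hli : LinearIndependent F fun i => shiftSum F r s ^ (d i - 1) *ᵥ v i :=
    linearIndependent_of_disjoint_support hne fun i j hij => Set.disjoint_left.2 fun x hi hj =>
      hij (he ((hsupp i x hi).symm.trans (hsupp j x hj)))
  obtain ⟨f, hf⟩ := exists_equiv_jordanBlockDiag (N := toLin' (shiftSum F r s)) (v := v)
    (by simpa only [← toLin'_pow, toLin'_apply] using hzero)
    (by simpa only [← toLin'_pow, toLin'_apply] using hli) (by simp [hd])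
  refine (matSimilar_jordanBlock_kronecker_one_add_shiftSum r s).trans ⟨f, fun x => ?_⟩
  rw [add_mulVec, one_mulVec, ← hf, toLin'_apply]

end KroneckerJordanBlocks

section Sl2

variable {R : Type*} [CommRing R]

open LieModule in
open scoped Nat in
lemma toEnd_pow_toEnd_pow_of_hasPrimitiveVectorWith {L M : Type*} [LieRing L] [LieAlgebra R L]
    [AddCommGroup M] [Module R M] [LieRingModule L M] [LieModule R L M] {h e f : L} {w : M} {m : ℕ}
    {t : IsSl2Triple h e f} (hw : t.HasPrimitiveVectorWith w (m : R)) {n : ℕ} (hn : n ≤ m) :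
    (toEnd R L M e ^ n) ((toEnd R L M f ^ n) w) = (n ! * m.descFactorial n : R) • w := by
  induction n with
  | zero => simp
  | succ n ih =>
    rw [pow_succ (toEnd R L M e), Module.End.mul_apply, toEnd_apply_apply,
      hw.lie_e_pow_succ_toEnd_f, map_smul, ih (by omega), smul_smul, Nat.factorial_succ,
      Nat.descFactorial_succ]
    push_cast [Nat.cast_sub (show n ≤ m by omega)]
    congr 1
    ring

lemma lie_diagonal_eq_smul {n : Type*} [Fintype n] [DecidableEq n] {a : n → R} {A : Matrix n n R}
    {c : R} (h : ∀ i j, A i j ≠ 0 → a i - a j = c) : ⁅diagonal a, A⁆ = c • A := by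
  ext i j
  rw [Ring.lie_def, Matrix.sub_apply, diagonal_mul, mul_diagonal, Matrix.smul_apply, smul_eq_mul]
  by_cases hij : A i j = 0
  · simp [hij]
  · rw [← h i j hij]
    ring

/-- The `sl₂`-partner of `shiftMatrix R m` in the `m`-dimensional representation of `sl₂`. -/
def coshiftMatrix (R : Type*) [Ring R] (m : ℕ) : Matrix (Fin m) (Fin m) R :=
  of fun i j => if (i : ℕ) = j + 1 then (i : R) * (m - i) else 0

/-- The diagonal matrix of the weights `m - 1, m - 3, …, 1 - m` of the `m`-dimensional
representation of `sl₂`. -/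
def weightMatrix (R : Type*) [Ring R] (m : ℕ) : Matrix (Fin m) (Fin m) R :=
  diagonal fun i => m - 1 - 2 * (i : R)

lemma lie_shiftMatrix_coshiftMatrix (m : ℕ) :
    ⁅shiftMatrix R m, coshiftMatrix R m⁆ = weightMatrix R m := by
  ext i j
  have hshift : (shiftMatrix R m * coshiftMatrix R m) i j =
      if i = j then (i + 1 : R) * (m - 1 - i) else 0 := by
    change (shiftMatrix R m *ᵥ fun k => coshiftMatrix R m k j) i = _
    rw [shiftMatrix_mulVec_apply]
    split_ifs with him hij hij
    · simp [coshiftMatrix, hij, sub_sub, add_comm]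
    · exact if_neg fun h => hij (Fin.ext (by simpa using h))
    · have hm : (m : R) = i + 1 := by
        exact_mod_cast congrArg (Nat.cast : ℕ → R) (show m = i + 1 by omega)
      rw [hm]
      ring
    · rfl
  have hcoshift : (coshiftMatrix R m * shiftMatrix R m) i j =
      if i = j then (i : R) * (m - i) else 0 := by
    change (coshiftMatrix R m i ᵥ* shiftMatrix R m) j = _
    rw [vecMul_shiftMatrix_apply]
    split_ifs with hj hij hij
    · exact if_pos (by rw [hij]; exact (Nat.sub_add_cancel hj).symm)
    · exact if_neg fun h => hij (Fin.ext (by simpa [Nat.sub_add_cancel hj] using h))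
    · rw [hij, Nat.eq_zero_of_not_pos hj, Nat.cast_zero, zero_mul]
    · rfl
  rw [Ring.lie_def, Matrix.sub_apply, hshift, hcoshift, weightMatrix, diagonal_apply]
  split_ifs <;> ring

lemma lie_weightMatrix_shiftMatrix (m : ℕ) :
    ⁅weightMatrix R m, shiftMatrix R m⁆ = (2 : R) • shiftMatrix R m := by
  refine lie_diagonal_eq_smul fun i j hij => ?_
  have hj : (j : ℕ) = i + 1 := by
    by_contra h
    exact hij (if_neg h)
  rw [hj]
  push_cast
  ring

lemma lie_weightMatrix_coshiftMatrix (m : ℕ) :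
    ⁅weightMatrix R m, coshiftMatrix R m⁆ = (-2 : R) • coshiftMatrix R m := by
  refine lie_diagonal_eq_smul fun i j hij => ?_
  have hi : (i : ℕ) = j + 1 := by
    by_contra h
    exact hij (if_neg h)
  rw [hi]
  push_cast
  ring

attribute [local instance] LieRing.ofAssociativeRing

lemma isSl2Triple_kroneckerSum {r s : ℕ}
    (h : kroneckerSum (weightMatrix R r) (weightMatrix R s) ≠ 0) :
    IsSl2Triple (toLin' (kroneckerSum (weightMatrix R r) (weightMatrix R s)))
      (toLin' (shiftSum R r s))
      (toLin' (kroneckerSum (coshiftMatrix R r) (coshiftMatrix R s))) where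
  h_ne_zero := by simpa using h
  lie_e_f := by
    rw [← lie_shiftMatrix_coshiftMatrix, ← lie_shiftMatrix_coshiftMatrix, ← lie_kroneckerSum]
    exact (lieEquivMatrix'.symm.map_lie _ _).symm
  lie_h_e_nsmul := by
    refine (lieEquivMatrix'.symm.map_lie _ _).symm.trans ?_
    rw [lie_kroneckerSum, lie_weightMatrix_shiftMatrix, lie_weightMatrix_shiftMatrix,
      kroneckerSum_smul, ofNat_smul_eq_nsmul]
    exact map_nsmul _ _ _
  lie_h_f_nsmul := by
    refine (lieEquivMatrix'.symm.map_lie _ _).symm.trans ?_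
    rw [lie_kroneckerSum, lie_weightMatrix_coshiftMatrix, lie_weightMatrix_coshiftMatrix,
      kroneckerSum_smul, neg_smul, ofNat_smul_eq_nsmul, map_neg]
    exact congrArg _ (map_nsmul _ _ _)

end Sl2

section AlternatingVec

variable {R : Type*} [CommRing R] {r s j : ℕ}

/-- The vector with alternating signs on the antidiagonal `i + k = j` and zeros elsewhere; for
`j < min r s` it is a kernel vector of `shiftSum R r s`. -/
def alternatingVec (R : Type*) [Ring R] (r s j : ℕ) : Fin r × Fin s → R :=
  fun x => if (x.1 + x.2 : ℕ) = j then (-1) ^ (x.1 : ℕ) else 0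

lemma alternatingVec_ne_zero [Nontrivial R] (hr : 0 < r) (hs : j < s) :
    alternatingVec R r s j ≠ 0 := fun h => by
  simpa [alternatingVec] using congrFun h (⟨0, hr⟩, ⟨j, hs⟩)

lemma shiftSum_mulVec_alternatingVec (hr : j < r) (hs : j < s) :
    shiftSum R r s *ᵥ alternatingVec R r s j = 0 := by
  ext x
  rw [kroneckerSum_mulVec_apply, shiftMatrix_mulVec_apply, shiftMatrix_mulVec_apply]
  simp only [alternatingVec, Pi.zero_apply, pow_succ]
  split_ifs <;> first | omega | ring

lemma kroneckerSum_weightMatrix_mulVec_alternatingVec {m : ℕ} (hm : m + 2 * j + 2 = r + s) :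
    kroneckerSum (weightMatrix R r) (weightMatrix R s) *ᵥ alternatingVec R r s j =
      (m : R) • alternatingVec R r s j := by
  have hm' : (m : R) + 2 * j + 2 = r + s := by exact_mod_cast congrArg (Nat.cast : ℕ → R) hm
  ext x
  rw [weightMatrix, weightMatrix, kroneckerSum_diagonal, mulVec_diagonal, Pi.smul_apply,
    smul_eq_mul]
  by_cases hx : (x.1 + x.2 : ℕ) = j
  · have hx' : (x.1 : R) + (x.2 : R) = j := by exact_mod_cast congrArg (Nat.cast : ℕ → R) hx
    congr 1
    linear_combination -2 * hx' - hm'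
  · simp [alternatingVec, hx]

end AlternatingVec

section ChainLengths

variable {F : Type*} [Field F] {r s : ℕ}

attribute [local instance] LieRing.ofAssociativeRing

open scoped Nat in
lemma exists_shiftSum_pow_mulVec_eq_smul_alternatingVec {m j : ℕ} (hr : j < r) (hs : j < s)
    (hm : m + 2 * j + 2 = r + s) (hm' : (m ! : F) ≠ 0) :
    ∃ v, shiftSum F r s ^ m *ᵥ v = (m ! * m ! : F) • alternatingVec F r s j := by
  rcases m.eq_zero_or_pos with rfl | hpos
  · exact ⟨alternatingVec F r s j, by simp⟩
  have hw : alternatingVec F r s j ≠ 0 := alternatingVec_ne_zero (by omega) hs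
  have hweight := kroneckerSum_weightMatrix_mulVec_alternatingVec (R := F) hm
  have hmF : (m : F) ≠ 0 := fun h => hm' <| by
    rw [← Nat.mul_factorial_pred hpos.ne', Nat.cast_mul, h, zero_mul]
  have hprim : (isSl2Triple_kroneckerSum (R := F) (r := r) (s := s) fun h =>
      smul_ne_zero hmF hw (by rw [← hweight, h, zero_mulVec])).HasPrimitiveVectorWith
      (alternatingVec F r s j) (m : F) :=
    ⟨hw, hweight, shiftSum_mulVec_alternatingVec hr hs⟩
  refine ⟨kroneckerSum (coshiftMatrix F r) (coshiftMatrix F s) ^ m *ᵥ alternatingVec F r s j, ?_⟩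
  have hpow := toEnd_pow_toEnd_pow_of_hasPrimitiveVectorWith hprim le_rfl
  rw [LieModule.toEnd_module_end, LieHom.id_apply, LieHom.id_apply, ← toLin'_pow, ← toLin'_pow,
    Nat.descFactorial_self] at hpow
  exact hpow

open scoped Nat in
lemma hasJordanChain_of_factorial_ne_zero {m j : ℕ} (hr : j < r) (hs : j < s)
    (hm : m + 2 * j + 2 = r + s) (hm' : (m ! : F) ≠ 0) : HasJordanChain F r s (m + 1) j := by
  obtain ⟨v, hv⟩ := exists_shiftSum_pow_mulVec_eq_smul_alternatingVec hr hs hm hm'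
  refine ⟨v, ?_, ?_, fun x hx => ?_⟩
  · rw [pow_succ', ← mulVec_mulVec, hv, mulVec_smul, shiftSum_mulVec_alternatingVec hr hs,
      smul_zero]
  · rw [Nat.add_sub_cancel, hv]
    exact smul_ne_zero (mul_ne_zero hm' hm') (alternatingVec_ne_zero (by omega) hs)
  · by_contra hne
    rw [Nat.add_sub_cancel, hv] at hx
    simp [alternatingVec, hne] at hx

lemma hasJordanChain_of_charP {p j : ℕ} (hp : p.Prime) [CharP F p] (hr : r ≤ p) (hs : s ≤ p)
    (hj : j < r + s - p) : HasJordanChain F r s p j := by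
  have : Fact p.Prime := ⟨hp⟩
  have : NeZero r := ⟨by omega⟩
  have : NeZero s := ⟨by omega⟩
  let y : Fin r × Fin s := (⟨r - 1, by omega⟩, ⟨j + (p - r), by omega⟩)
  have hcol : ∀ x, (shiftSum F r s ^ (p - 1) *ᵥ Pi.single y 1) x = (shiftSum F r s ^ (p - 1)) x y :=
    fun x => by rw [mulVec_single_one, col_apply]
  refine ⟨Pi.single y 1, ?_, fun h => ?_, fun x hx => ?_⟩
  · rw [shiftSum_pow_char_eq_zero p hr hs, zero_mulVec]
  · have hentry := shiftSum_pow_add_apply (R := F) (a := r - 1) (b := p - r)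
      (x := (⟨0, by omega⟩, ⟨j, by omega⟩)) (y := y) (Nat.zero_add _).symm rfl
    rw [show r - 1 + (p - r) = p - 1 by omega, ← hcol, h, Pi.zero_apply, eq_comm,
      CharP.cast_eq_zero_iff F p] at hentry
    have hdvd : p ∣ (p - 1).factorial :=
      Nat.choose_mul_factorial_mul_factorial (show r - 1 ≤ p - 1 by omega) ▸
        (hentry.mul_right _).mul_right _
    have := hp.dvd_factorial.1 hdvd
    omega
  · rw [hcol] at hx
    have hxy := not_imp_comm.1 shiftSum_pow_apply_eq_zero hx
    simp only [y] at hxy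
    omega

end ChainLengths

section Decompositions

lemma sum_range_min (a b : ℕ) : ∑ j ∈ range (min a b), (a + b - (2 * j + 1)) = a * b := by
  induction a generalizing b with
  | zero => simp
  | succ a ih =>
    cases b with
    | zero => simp
    | succ b =>
      have hstep : ∀ j, a + 1 + (b + 1) - (2 * (j + 1) + 1) = a + b - (2 * j + 1) := by omega
      rw [Nat.succ_min_succ, sum_range_succ', sum_congr rfl fun j _ => hstep j, ih]
      rw [show a + 1 + (b + 1) - (2 * 0 + 1) = a + b + 1 by omega]
      ring

lemma sum_fin_min (a b : ℕ) : ∑ j : Fin (min a b), (a + b - (2 * (j : ℕ) + 1)) = a * b := by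
  rw [Fin.sum_univ_eq_sum_range fun j => a + b - (2 * j + 1), sum_range_min]

variable {F : Type*} [Field F] {r s : ℕ}

open scoped Nat in
theorem matSimilar_jordanBlock_kronecker_of_factorial_ne_zero (h : ((r + s - 2)! : F) ≠ 0) :
    MatSimilar F (jordanBlock F r ⊗ₖ jordanBlock F s)
      (jordanBlockDiag F fun j : Fin (min r s) => r + s - (2 * (j : ℕ) + 1)) := by
  refine matSimilar_jordanBlockDiag_of_hasJordanChain (fun j => ?_) Fin.val_injective
    (sum_fin_min r s)
  rw [show r + s - (2 * (j : ℕ) + 1) = r + s - 2 * (j + 1) + 1 by omega]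
  refine hasJordanChain_of_factorial_ne_zero (by omega) (by omega) (by omega) fun hj => h ?_
  exact zero_dvd_iff.1 (hj ▸ Nat.cast_dvd_cast (Nat.factorial_dvd_factorial (by omega)))

theorem matSimilar_jordanBlock_kronecker_of_charP {p : ℕ} (hp : p.Prime) [CharP F p] (hr : r ≤ p)
    (hs : s ≤ p) (hrs : p ≤ r + s) :
    MatSimilar F (jordanBlock F r ⊗ₖ jordanBlock F s)
      (jordanBlockDiag F (Sum.elim (fun _ : Fin (r + s - p) => p)
        fun j : Fin (p - max r s) => 2 * p - r - s - (2 * (j : ℕ) + 1))) := by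
  refine matSimilar_jordanBlockDiag_of_hasJordanChain
    (e := Sum.elim (fun j => j) fun j => r + s - p + j) ?_ ?_ ?_
  · rintro (j | j)
    · exact hasJordanChain_of_charP hp hr hs j.2
    · dsimp only [Sum.elim_inr]
      rw [show 2 * p - r - s - (2 * (j : ℕ) + 1) = 2 * p - r - s - 2 * (j + 1) + 1 by omega]
      refine hasJordanChain_of_factorial_ne_zero (by omega) (by omega) (by omega) ?_
      rw [Ne, CharP.cast_eq_zero_iff F p, hp.dvd_factorial]
      omega
  · exact Fin.val_injective.sumElim (fun a b h => Fin.ext (by simpa using h)) fun a b => by omega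
  · have hsum := sum_fin_min (p - r) (p - s)
    rw [show min (p - r) (p - s) = p - max r s by omega,
      show p - r + (p - s) = 2 * p - r - s by omega] at hsum
    simp only [Fintype.sum_sum_type, Sum.elim_inl, Sum.elim_inr, hsum, sum_const, card_univ,
      Fintype.card_fin, smul_eq_mul]
    zify [hr, hs, hrs]
    ring

end Decompositions

/-- Symmetrised base case: for `1 ≤ r, s ≤ p`, the decomposition of `J_r ⊗ J_s` in the two
cases `r + s ≤ p` and `r + s > p`. -/
theorem stmt_8 {F : Type*} [Field F] (p : ℕ) (hp : p.Prime) [CharP F p]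
    (r s : ℕ) (hr : 1 ≤ r) (hrp : r ≤ p) (hs : 1 ≤ s) (hsp : s ≤ p) :
    (r + s ≤ p →
      MatSimilar F (jordanBlock F r ⊗ₖ jordanBlock F s)
        (jordanBlockDiag F (fun j : Fin (min r s) => r + s - (2 * (j : ℕ) + 1)))) ∧
    (p < r + s →
      MatSimilar F (jordanBlock F r ⊗ₖ jordanBlock F s)
        (jordanBlockDiag F (Sum.elim
          (fun _ : Fin (r + s - p) => p)
          (fun j : Fin (p - max r s) => 2 * p - r - s - (2 * (j : ℕ) + 1))))) := by
  refine ⟨fun hrs => matSimilar_jordanBlock_kronecker_of_factorial_ne_zero ?_,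
    fun hrs => matSimilar_jordanBlock_kronecker_of_charP hp hrp hsp hrs.le⟩
  rw [Ne, CharP.cast_eq_zero_iff F p, hp.dvd_factorial]
  omega
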